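/- Let G be a finitely presented group and let g₁,…,g_m be non-trivial elements of G whose images in G/R_G have infinite order. For a natural number n, let H_n denote the normal closure in G of {g₁^n,…,g_m^n}. Then for every ε > 0 there exists a natural number k such that for every non-zero integer q, rdef(G/H_{kq}) ≥ rdef(G) − ε. -/

import Mathlib

/-!
Given a presentation of `G` with relators `uᵢ ^ aᵢ` and `rdef` within `ε / 2` of the supremum,
lift each `gⱼ` to a free group element `wⱼ = vⱼ ^ bⱼ` with `vⱼ` not a proper power
(`exists_root`; iterating roots stops because taking powers increases length). Adding the relators
`vⱼ ^ (bⱼ * k * |q|)` presents `G / H_{kq}`. Choose a finite quotient `P` of `G` in which every `uᵢ`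
has order at least its order in `G / R_G` and every `gⱼ` has order at least `M`, where
`m / M < ε / 2`, and let `k = |P|`. Then `P` is also a quotient of `G / H_{kq}` for every `q`, so the
orders of the `uᵢ` modulo the finite residual do not drop and the `vⱼ` have order at least `M`
there: the new presentation loses at most `ε / 2`.

Because `rdef` is a real supremum, this yields the theorem only once the residual deficiencies of
the presentations of `G / H_{kq}` are known to be bounded above (`bddAbove_rdefSet`). The bound is
the number `d` of generators of the group, whatever the presentation. Let `P` be a finite quotient
of a group `Γ` in which the roots `uᵢ` of the relators have order at least their orders `kᵢ` modulo
the finite residual. Derivations `F_n → (P → ℚ)` form a space of dimension `n |P|`. The value of a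
derivation on the relator `uᵢ ^ aᵢ` is fixed by `uᵢ`, because the relator commutes with `uᵢ` and
dies in `P`, so it lies in a space of dimension at most `|P| / kᵢ`. Hence the derivations killing
all relators have dimension at least `|P| (n - ∑ 1 / kᵢ)`. They are determined by their values on
lifts of `d` generators of `Γ`, so the dimension is at most `d |P|`
(`card_le_of_presentation`). Derivations are realised as homomorphisms to the wreath product
`ℚ ≀ P`.
-/

open scoped Classical ENNReal

namespace ResDef

variable {G : Type*} [Group G]

/-- The order of the image of `x` in `G ⧸ H`: the least positive `j` with `x ^ j ∈ H`,
or `0` if there is no such `j`. -/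
noncomputable def orderIn (H : Subgroup G) (x : G) : ℕ :=
  sInf {j : ℕ | 0 < j ∧ x ^ j ∈ H}

/-- The finite residual: the intersection of all finite index subgroups. -/
def finiteResidual (G : Type*) [Group G] : Subgroup G :=
  ⨅ (H : Subgroup G) (_ : H.index ≠ 0), H

/-- An element of a free group is not a proper power. -/
def NotProperPower {α : Type*} (u : FreeGroup α) : Prop :=
  ∀ (v : FreeGroup α) (k : ℕ), u = v ^ k → k = 1

/-- `G` admits a finite presentation. -/
def FinitelyPresentedGroup (G : Type*) [Group G] : Prop :=
  ∃ (n : ℕ) (R : Finset (FreeGroup (Fin n))) (φ : FreeGroup (Fin n) →* G),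
    Function.Surjective φ ∧ φ.ker = Subgroup.normalClosure (R : Set (FreeGroup (Fin n)))

/-- The deficiency of a finitely presented group. -/
noncomputable def deficiency (G : Type*) [Group G] : ℝ :=
  sSup {x : ℝ | ∃ (n : ℕ) (R : Finset (FreeGroup (Fin n))) (φ : FreeGroup (Fin n) →* G),
    Function.Surjective φ ∧ φ.ker = Subgroup.normalClosure (R : Set (FreeGroup (Fin n))) ∧
    x = (n : ℝ) - (R.card : ℝ)}

/-- The residual deficiency of a finitely presented group. -/
noncomputable def rdef (G : Type*) [Group G] : ℝ :=
  sSup {x : ℝ | ∃ (n s : ℕ) (u : Fin s → FreeGroup (Fin n)) (m : Fin s → ℕ)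
    (φ : FreeGroup (Fin n) →* G),
    (∀ i, 1 ≤ m i) ∧ (∀ i, NotProperPower (u i)) ∧ Function.Surjective φ ∧
    φ.ker = Subgroup.normalClosure (Set.range fun i => u i ^ m i) ∧
    x = (n : ℝ) - ∑ i, ((orderIn (finiteResidual G) (φ (u i)) : ℝ))⁻¹}

/-- The deficiency gradient. -/
noncomputable def DG (G : Type*) [Group G] : ℝ :=
  sSup {x : ℝ | ∃ H : Subgroup G, H.index ≠ 0 ∧
    x = (deficiency H - 1) / (H.index : ℝ)}

/-- `ν_p(r)`: the largest `k` such that `r = s ^ (p ^ k)` for some `s`. -/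
noncomputable def nuP (p : ℕ) {α : Type*} (r : FreeGroup α) : ℕ :=
  sSup {k : ℕ | ∃ s : FreeGroup α, r = s ^ (p ^ k)}

/-- The `p`-deficiency of a group. -/
noncomputable def defP (p : ℕ) (G : Type*) [Group G] : ℝ :=
  sSup {x : ℝ | ∃ (n : ℕ) (R : Set (FreeGroup (Fin n))) (φ : FreeGroup (Fin n) →* G),
    Function.Surjective φ ∧ φ.ker = Subgroup.normalClosure R ∧
    Summable (fun r : R => ((p : ℝ) ^ (nuP p r.1))⁻¹) ∧
    x = (n : ℝ) - ∑' r : R, ((p : ℝ) ^ (nuP p r.1))⁻¹}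

/-- The `p`-deficiency gradient. -/
noncomputable def DGp (p : ℕ) (G : Type*) [Group G] : ℝ :=
  sSup {x : ℝ | ∃ H : Subgroup G, H.Normal ∧ H.index ≠ 0 ∧
    x = (defP p H - 1) / (H.index : ℝ)}

/-- The rank (minimal number of generators) of a group. -/
noncomputable def grpRank (G : Type*) [Group G] : ℕ :=
  sInf {n : ℕ | ∃ S : Finset G, S.card = n ∧ Subgroup.closure (S : Set G) = ⊤}

/-- The rank gradient. -/
noncomputable def RG (G : Type*) [Group G] : ℝ :=
  sInf {x : ℝ | ∃ H : Subgroup G, H.index ≠ 0 ∧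
    x = ((grpRank H : ℝ) - 1) / (H.index : ℝ)}

/-- The `p`-rank: the largest `n` such that `G` surjects onto `(C_p)^n`. -/
noncomputable def pRank (p : ℕ) (G : Type*) [Group G] : ℕ :=
  sSup {n : ℕ | ∃ f : G →* (Fin n → Multiplicative (ZMod p)), Function.Surjective f}

/-- The `p`-rank gradient. -/
noncomputable def RGp (p : ℕ) (G : Type*) [Group G] : ℝ :=
  sInf {x : ℝ | ∃ H : Subgroup G, H.Normal ∧ H.index ≠ 0 ∧
    x = ((pRank p H : ℝ) - 1) / (H.index : ℝ)}

/-- `G` is large: some finite index subgroup surjects onto a free group of rank 2. -/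
def Large (G : Type*) [Group G] : Prop :=
  ∃ H : Subgroup G, H.index ≠ 0 ∧ ∃ f : H →* FreeGroup (Fin 2), Function.Surjective f

/-- The first Betti number: the largest `n` such that `G` surjects onto `ℤ^n`. -/
noncomputable def firstBetti (G : Type*) [Group G] : ℕ :=
  sSup {n : ℕ | ∃ f : G →* Multiplicative (Fin n → ℤ), Function.Surjective f}

/-- The order of the image of `x` in `G ⧸ H`, as an extended natural number. -/
noncomputable def orderInE (H : Subgroup G) (x : G) : ℕ∞ :=
  if orderIn H x = 0 then ⊤ else (orderIn H x : ℕ∞)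

/-- `ν(g; G, K)` from the paper, valued in `ℕ∞`. -/
noncomputable def nu (K : Subgroup G) (g : G) : ℕ∞ :=
  if g ∈ K then
    sSup ((fun a : G => orderInE K a) '' {a : G | ∃ n : ℤ, a ^ n = g})
  else
    sSup ((fun q : G × ℤ => (q.2.natAbs : ℕ∞)) '' {q : G × ℤ | q.2 ≠ 0 ∧ q.1 ^ q.2 = g})

/-- The relative size `ν(g;G,K)⁻¹` of an element (`0` if `ν` is infinite). -/
noncomputable def relsizeElem (K : Subgroup G) (g : G) : ℝ :=
  (((nu K g).toNat : ℝ))⁻¹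

/-- The relative size of a finite set. -/
noncomputable def relsizeFinset (K : Subgroup G) (S : Finset G) : ℝ :=
  ∑ g ∈ S, relsizeElem K g

/-- The relative size of a normal subgroup `M`, finitely generated as a normal subgroup. -/
noncomputable def relsizeSubgroup (K M : Subgroup G) : ℝ :=
  sInf {x : ℝ | ∃ S : Finset G, Subgroup.normalClosure (S : Set G) = M ∧
    x = relsizeFinset K S}

/-- `a` is a minimal root of `g` in `G` with respect to `K`. -/
def IsMinimalRoot (K : Subgroup G) (g a : G) : Prop :=
  (g ∈ K ∧ (∃ n : ℤ, a ^ n = g) ∧ ((orderIn K a : ℕ∞) = nu K g)) ∨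
  (g ∉ K ∧ ∃ m : ℕ, (m : ℕ∞) = nu K g ∧ a ^ m = g)

/-! ### Roots in free groups -/

/-- The reduced form of `v ^ k` is `c * w ^ k * c⁻¹`, with `w` the cyclic reduction of `v`, so the
length of `v ^ k` grows strictly with `k`. -/
lemma norm_lt_norm_pow {α : Type*} [DecidableEq α] {v : FreeGroup α} (hv : v ≠ 1) {k : ℕ}
    (hk : 2 ≤ k) : v.norm < (v ^ k).norm := by
  have key : ∀ j : ℕ, j ≠ 0 → (v ^ j).norm =
      (FreeGroup.reduceCyclically.conjugator v.toWord).length +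
        (j * (FreeGroup.reduceCyclically v.toWord).length +
          (FreeGroup.reduceCyclically.conjugator v.toWord).length) := by
    intro j hj
    simp [FreeGroup.norm, FreeGroup.toWord_pow, FreeGroup.reduceCyclically.reduce_flatten_replicate,
      FreeGroup.isReduced_toWord, hj]
  have hr : 0 < (FreeGroup.reduceCyclically v.toWord).length := by
    rw [List.length_pos_iff]
    intro h0
    apply hv
    have h := congr_arg FreeGroup.mk
      (FreeGroup.reduceCyclically.conj_conjugator_reduceCyclically v.toWord)
    rw [h0, FreeGroup.mk_toWord, List.append_nil, ← FreeGroup.mul_mk, ← FreeGroup.inv_mk,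
      mul_inv_cancel] at h
    exact h.symm
  have h1 := key 1 one_ne_zero
  rw [pow_one] at h1
  rw [h1, key k (by omega)]
  nlinarith

lemma exists_root {α : Type*} [DecidableEq α] (w : FreeGroup α) (hw : w ≠ 1) :
    ∃ (u : FreeGroup α) (a : ℕ), 1 ≤ a ∧ NotProperPower u ∧ w = u ^ a := by
  induction hN : w.norm using Nat.strong_induction_on generalizing w with
  | _ N ih =>
    by_cases hp : NotProperPower w
    · exact ⟨w, 1, le_rfl, hp, (pow_one w).symm⟩
    · unfold NotProperPower at hp
      push Not at hp
      obtain ⟨v, k, hvk, hk⟩ := hp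
      have hk0 : k ≠ 0 := by
        rintro rfl
        exact hw (by simpa using hvk)
      have hv : v ≠ 1 := by
        rintro rfl
        exact hw (by simpa using hvk)
      have hlt : v.norm < N := by
        rw [← hN, hvk]
        exact norm_lt_norm_pow hv (by omega)
      obtain ⟨u, a, ha, hu, hva⟩ := ih v.norm hlt v hv rfl
      refine ⟨u, a * k, Nat.mul_pos ha (Nat.pos_of_ne_zero hk0), hu, ?_⟩
      rw [hvk, hva, pow_mul]

/-! ### Orders modulo the finite residual -/

lemma finiteResidual_le_ker {Γ P : Type*} [Group Γ] [Group P] [Finite P] (f : Γ →* P) :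
    finiteResidual Γ ≤ f.ker := by
  unfold finiteResidual
  exact iInf₂_le f.ker (Subgroup.FiniteIndex.index_ne_zero (H := f.ker))

lemma orderIn_spec {Γ : Type*} [Group Γ] (H : Subgroup Γ) (x : Γ) {j : ℕ} (hj : 0 < j)
    (hx : x ^ j ∈ H) : 0 < orderIn H x ∧ x ^ orderIn H x ∈ H :=
  Nat.sInf_mem (s := {j : ℕ | 0 < j ∧ x ^ j ∈ H}) ⟨j, hj, hx⟩

/-- The convention `orderIn = 0` for elements of infinite order agrees with `0⁻¹ = 0`. -/
lemma inv_orderIn_le {Γ P : Type*} [Group Γ] [Group P] [Finite P] (f : Γ →* P) (x : Γ) {N : ℕ}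
    (hN : 0 < N) (h : N ≤ orderOf (f x)) :
    ((orderIn (finiteResidual Γ) x : ℝ))⁻¹ ≤ (N : ℝ)⁻¹ := by
  rcases Nat.eq_zero_or_pos (orderIn (finiteResidual Γ) x) with h0 | hpos
  · rw [h0]
    simp
  · have hmem : 0 < orderIn (finiteResidual Γ) x ∧
        x ^ orderIn (finiteResidual Γ) x ∈ finiteResidual Γ :=
      Nat.sInf_mem (s := {j : ℕ | 0 < j ∧ x ^ j ∈ finiteResidual Γ}) (Nat.nonempty_of_pos_sInf hpos)
    have h1 : f x ^ orderIn (finiteResidual Γ) x = 1 := by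
      rw [← map_pow]
      exact finiteResidual_le_ker f hmem.2
    have h2 : N ≤ orderIn (finiteResidual Γ) x := h.trans (orderOf_le_of_pow_eq_one hpos h1)
    have h3 : (N : ℝ) ≤ (orderIn (finiteResidual Γ) x : ℝ) := by exact_mod_cast h2
    exact inv_anti₀ (by exact_mod_cast hN) h3

lemma exists_normal_avoiding {Γ ι : Type*} [Group Γ] [Finite ι] (t : ι → Γ)
    (ht : ∀ i, t i ∉ finiteResidual Γ) :
    ∃ K : Subgroup Γ, K.Normal ∧ K.FiniteIndex ∧ ∀ i, t i ∉ K := by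
  have h : ∀ i, ∃ H : Subgroup Γ, H.FiniteIndex ∧ t i ∉ H := by
    intro i
    have := ht i
    simp only [finiteResidual, Subgroup.mem_iInf, not_forall] at this
    obtain ⟨H, hH, hi⟩ := this
    exact ⟨H, ⟨hH⟩, hi⟩
  choose H hH hi using h
  have : (⨅ i, H i).FiniteIndex := Subgroup.finiteIndex_iInf hH
  exact ⟨(⨅ i, H i).normalCore, inferInstance, inferInstance,
    fun i hmem => hi i ((Subgroup.mem_iInf.1 (Subgroup.normalCore_le _ hmem)) i)⟩

/-- Finitely many lower bounds on orders modulo the finite residual can be realised in a single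
finite quotient. -/
lemma exists_finite_quotient {Γ ι : Type*} [Group Γ] [Finite ι] (x : ι → Γ) (N : ι → ℕ)
    (h : ∀ i j, 0 < j → j < N i → x i ^ j ∉ finiteResidual Γ) :
    ∃ (K : Subgroup Γ) (_ : K.Normal), K.FiniteIndex ∧
      ∀ i, N i ≤ orderOf (QuotientGroup.mk' K (x i)) := by
  obtain ⟨K, hK, hKf, hKa⟩ := exists_normal_avoiding
    (fun q : (i : ι) × {j : Fin (N i) // 0 < (j : ℕ)} => x q.1 ^ (q.2.1 : ℕ))
    (fun q => h q.1 q.2.1 q.2.2 q.2.1.2)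
  refine ⟨K, hK, hKf, fun i => ?_⟩
  by_contra! hlt
  refine hKa ⟨i, ⟨_, hlt⟩, orderOf_pos _⟩ ?_
  rw [← QuotientGroup.eq_one_iff]
  exact pow_orderOf_eq_one (QuotientGroup.mk' K (x i))

/-! ### Derivations of a free group into a finite group ring -/

section Derivations

variable {P : Type*} [Group P] {n : ℕ}

/-- The homomorphism to the wreath product `ℚ ≀ P = (P → ℚ) ⋊ P` lifting `π` and with prescribed
left components on the generators. -/
noncomputable def wreathLift (π : FreeGroup (Fin n) →* P) (v : Fin n → P → ℚ) :
    FreeGroup (Fin n) →* RegularWreathProduct (Multiplicative ℚ) P :=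
  FreeGroup.lift fun i => ⟨fun x => Multiplicative.ofAdd (v i x), π (FreeGroup.of i)⟩

/-- The derivation `FreeGroup (Fin n) → (P → ℚ)` over `π` whose values on the generators are `v`;
here `a : P` acts on functions by `(a • f) x = f (a⁻¹ * x)`. -/
noncomputable def freeDeriv (π : FreeGroup (Fin n) →* P) (v : Fin n → P → ℚ)
    (w : FreeGroup (Fin n)) : P → ℚ :=
  fun x => ((wreathLift π v w).left x).toAdd

variable (π : FreeGroup (Fin n) →* P) (v : Fin n → P → ℚ)

lemma wreathLift_right (w : FreeGroup (Fin n)) : (wreathLift π v w).right = π w := by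
  have : RegularWreathProduct.rightHom.comp (wreathLift π v) = π := by
    ext i
    simp [wreathLift, RegularWreathProduct.rightHom]
  exact DFunLike.congr_fun this w

lemma freeDeriv_of (i : Fin n) : freeDeriv π v (FreeGroup.of i) = v i := by
  funext x
  simp [freeDeriv, wreathLift]

lemma freeDeriv_one : freeDeriv π v 1 = 0 := by
  funext x
  simp [freeDeriv]

lemma freeDeriv_mul (a b : FreeGroup (Fin n)) (x : P) :
    freeDeriv π v (a * b) x = freeDeriv π v a x + freeDeriv π v b ((π a)⁻¹ * x) := by
  simp [freeDeriv, wreathLift_right]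

lemma freeDeriv_inv (a : FreeGroup (Fin n)) (x : P) :
    freeDeriv π v a⁻¹ x = - freeDeriv π v a (π a * x) := by
  simp [freeDeriv, wreathLift_right]

lemma freeDeriv_add (v v' : Fin n → P → ℚ) (w : FreeGroup (Fin n)) :
    freeDeriv π (v + v') w = freeDeriv π v w + freeDeriv π v' w := by
  induction w using FreeGroup.induction_on with
  | C1 => simp [freeDeriv_one]
  | of i => simp [freeDeriv_of]
  | inv_of i ih =>
    funext x
    simp [freeDeriv_inv, freeDeriv_of]
    ring
  | mul a b ha hb =>
    funext x
    simp [freeDeriv_mul, ha, hb]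
    ring

lemma freeDeriv_smul (c : ℚ) (w : FreeGroup (Fin n)) : freeDeriv π (c • v) w = c • freeDeriv π v w := by
  induction w using FreeGroup.induction_on with
  | C1 => simp [freeDeriv_one]
  | of i => simp [freeDeriv_of]
  | inv_of i ih =>
    funext x
    simp [freeDeriv_inv, freeDeriv_of]
  | mul a b ha hb =>
    funext x
    simp [freeDeriv_mul, ha, hb]
    ring

/-- The functions on `P` invariant under left translation by `a⁻¹`, hence by `⟨a⟩`. -/
def invariants (a : P) : Submodule ℚ (P → ℚ) where
  carrier := {f | ∀ x, f (a⁻¹ * x) = f x}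
  add_mem' hf hg x := by simp [hf x, hg x]
  zero_mem' x := rfl
  smul_mem' c f hf x := by simp [hf x]

lemma finrank_invariants_mul_le [Finite P] (a : P) :
    Module.finrank ℚ (invariants a) * orderOf a ≤ Nat.card P := by
  have : Fintype P := Fintype.ofFinite P
  have hzp : ∀ f ∈ invariants a, ∀ z ∈ Subgroup.zpowers a, ∀ x, f (z⁻¹ * x) = f x := by
    intro f hf z hz
    let T : Subgroup P :=
      { carrier := {z | ∀ x, f (z⁻¹ * x) = f x}
        one_mem' := fun x => by simp
        mul_mem' := fun {b c} hb hc x => by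
          rw [mul_inv_rev, mul_assoc, hc, hb]
        inv_mem' := fun {b} hb x => by
          rw [inv_inv, ← hb (b * x), inv_mul_cancel_left] }
    have hT : Subgroup.zpowers a ≤ T := Subgroup.zpowers_le.2 hf
    exact hT hz
  -- An invariant function is determined by its values on inverses of representatives of the
  -- left cosets of `⟨a⟩`.
  let ev : invariants a →ₗ[ℚ] ((P ⧸ Subgroup.zpowers a) → ℚ) :=
    { toFun := fun f c => f.1 (Quotient.out c)⁻¹
      map_add' := fun f g => rfl
      map_smul' := fun c f => rfl }
  have hinj : Function.Injective ev := by
    intro f g hfg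
    ext x
    obtain ⟨z, hz⟩ := QuotientGroup.mk_out_eq_mul (Subgroup.zpowers a) x⁻¹
    have h1 := congr_fun hfg (x⁻¹ : P)
    have h2 : f.1 (Quotient.out ((x⁻¹ : P) : P ⧸ Subgroup.zpowers a))⁻¹ =
      g.1 (Quotient.out ((x⁻¹ : P) : P ⧸ Subgroup.zpowers a))⁻¹ := h1
    rw [hz, mul_inv_rev, inv_inv, hzp f.1 f.2 _ z.2, hzp g.1 g.2 _ z.2] at h2
    exact h2
  have hle := LinearMap.finrank_le_finrank_of_injective hinj
  rw [Module.finrank_fintype_fun_eq_card, ← Nat.card_eq_fintype_card] at hle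
  calc _ ≤ Nat.card (P ⧸ Subgroup.zpowers a) * orderOf a := Nat.mul_le_mul_right _ hle
    _ = Nat.card P := by
      rw [← Nat.card_zpowers, ← Subgroup.card_eq_card_quotient_mul_card_subgroup]

/-- If `r` commutes with `a` and dies in `P`, expanding a derivation on `a * r = r * a` shows that
its value on `r` is fixed by `a`. -/
lemma freeDeriv_mem_invariants {a r : FreeGroup (Fin n)} (hr : π r = 1) (har : Commute a r) :
    freeDeriv π v r ∈ invariants (π a) := by
  intro x
  have h := congr_fun (congr_arg (freeDeriv π v) har.eq) x
  rw [freeDeriv_mul, freeDeriv_mul, hr, inv_one, one_mul] at h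
  linarith

/-- Comparison of the dimension of the space of derivations of `Γ` into `P → ℚ`, bounded below by a
presentation and above by the values on a generating family. -/
theorem card_le_of_presentation {Γ : Type*} [Group Γ] [Finite P] {s d : ℕ}
    (φ : FreeGroup (Fin n) →* Γ) (p : Γ →* P) (u : Fin s → FreeGroup (Fin n)) (m : Fin s → ℕ)
    (hker : φ.ker = Subgroup.normalClosure (Set.range fun i => u i ^ m i))
    (y : Fin d → FreeGroup (Fin n)) (hy : Subgroup.closure (Set.range fun l => φ (y l)) = ⊤) :
    n * Nat.card P ≤ d * Nat.card P +
      ∑ i, Module.finrank ℚ (invariants (p (φ (u i)))) := by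
  have : Fintype P := Fintype.ofFinite P
  set π : FreeGroup (Fin n) →* P := p.comp φ with hπ
  have hrel : ∀ i, φ (u i ^ m i) = 1 := by
    intro i
    rw [← MonoidHom.mem_ker, hker]
    exact Subgroup.subset_normalClosure ⟨i, rfl⟩
  have hrelπ : ∀ i, π (u i ^ m i) = 1 := fun i => by
    rw [hπ, MonoidHom.comp_apply, hrel, map_one]
  let Φ : (Fin n → P → ℚ) →ₗ[ℚ] ((i : Fin s) → invariants (p (φ (u i)))) :=
    { toFun := fun v i => ⟨freeDeriv π v (u i ^ m i),
        freeDeriv_mem_invariants π v (a := u i) (hrelπ i) (Commute.self_pow _ _)⟩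
      map_add' := fun v v' => by
        ext i : 2
        exact freeDeriv_add π v v' _
      map_smul' := fun c v => by
        ext i : 2
        exact freeDeriv_smul π v c _ }
  let Ψ : LinearMap.ker Φ →ₗ[ℚ] (Fin d → P → ℚ) :=
    { toFun := fun v l => freeDeriv π v.1 (y l)
      map_add' := fun v v' => by
        ext l : 1
        exact freeDeriv_add π v.1 v'.1 _
      map_smul' := fun c v => by
        ext l : 1
        exact freeDeriv_smul π v.1 c _ }
  have hΨ : Function.Injective Ψ := by
    rw [← LinearMap.ker_eq_bot, LinearMap.ker_eq_bot']
    rintro ⟨v, hv⟩ hΨv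
    have hvrel : ∀ i, freeDeriv π v (u i ^ m i) = 0 := fun i =>
      congr_arg Subtype.val (congr_fun (LinearMap.mem_ker.1 hv) i)
    have hvy : ∀ l, freeDeriv π v (y l) = 0 := fun l => congr_fun hΨv l
    have hle : φ.ker ≤ (wreathLift π v).ker := by
      rw [hker]
      apply Subgroup.normalClosure_le_normal
      rintro _ ⟨i, rfl⟩
      change wreathLift π v (u i ^ m i) = 1
      ext x
      · exact congr_fun (hvrel i) x
      · rw [wreathLift_right, hrelπ]
        rfl
    -- The zero locus of a derivation is a subgroup.
    let S : Subgroup (FreeGroup (Fin n)) :=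
      { carrier := {w | freeDeriv π v w = 0}
        one_mem' := freeDeriv_one π v
        mul_mem' := fun {a b} ha hb => by
          have ha' : freeDeriv π v a = 0 := ha
          have hb' : freeDeriv π v b = 0 := hb
          change freeDeriv π v (a * b) = 0
          funext x
          simp [freeDeriv_mul, ha', hb']
        inv_mem' := fun {a} ha => by
          have ha' : freeDeriv π v a = 0 := ha
          change freeDeriv π v a⁻¹ = 0
          funext x
          simp [freeDeriv_inv, ha'] }
    have hkS : φ.ker ≤ S := by
      intro w hw
      have h1 : wreathLift π v w = 1 := hle hw
      change freeDeriv π v w = 0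
      funext x
      simp [freeDeriv, h1]
    have hmap : S.map φ = ⊤ := by
      rw [eq_top_iff, ← hy, Subgroup.closure_le]
      rintro _ ⟨l, rfl⟩
      exact ⟨y l, hvy l, rfl⟩
    have hS : ∀ w, w ∈ S := by
      intro w
      obtain ⟨t, ht, htw⟩ : φ w ∈ S.map φ := hmap ▸ Subgroup.mem_top _
      have h1 : t⁻¹ * w ∈ S := hkS (by rw [MonoidHom.mem_ker, map_mul, map_inv, htw]; simp)
      simpa using S.mul_mem ht h1
    ext1
    funext i
    have h1 : freeDeriv π v (FreeGroup.of i) = 0 := hS (FreeGroup.of i)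
    rw [freeDeriv_of] at h1
    exact h1
  have h1 := LinearMap.finrank_le_finrank_of_injective hΨ
  have h2 := LinearMap.finrank_range_add_finrank_ker Φ
  have h3 := Submodule.finrank_le (LinearMap.range Φ)
  have hfun : ∀ k : ℕ, Module.finrank ℚ (Fin k → P → ℚ) = k * Nat.card P := by
    intro k
    rw [Module.finrank_pi_fintype]
    simp
  rw [hfun] at h1 h2
  rw [Module.finrank_pi_fintype] at h3
  omega

end Derivations

/-! ### Boundedness of the residual deficiencies of presentations -/

/-- The set of residual deficiencies of finite presentations of `Γ`. -/
def rdefSet (Γ : Type*) [Group Γ] : Set ℝ :=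
  {x : ℝ | ∃ (n s : ℕ) (u : Fin s → FreeGroup (Fin n)) (m : Fin s → ℕ)
    (φ : FreeGroup (Fin n) →* Γ),
    (∀ i, 1 ≤ m i) ∧ (∀ i, NotProperPower (u i)) ∧ Function.Surjective φ ∧
    φ.ker = Subgroup.normalClosure (Set.range fun i => u i ^ m i) ∧
    x = (n : ℝ) - ∑ i, ((orderIn (finiteResidual Γ) (φ (u i)) : ℝ))⁻¹}

lemma rdef_eq (Γ : Type*) [Group Γ] : rdef Γ = sSup (rdefSet Γ) := rfl

lemma pow_notMem_of_lt_orderIn {Γ : Type*} [Group Γ] (H : Subgroup Γ) (x : Γ) {j : ℕ}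
    (hj : 0 < j) (hlt : j < orderIn H x) : x ^ j ∉ H := fun hmem =>
  Nat.notMem_of_lt_sInf hlt ⟨hj, hmem⟩

/-- A `d`-generator group has residual deficiency at most `d`. -/
theorem bddAbove_rdefSet {Γ : Type*} [Group Γ] {d : ℕ} (γ : FreeGroup (Fin d) →* Γ)
    (hγ : Function.Surjective γ) : BddAbove (rdefSet Γ) := by
  refine ⟨d, ?_⟩
  rintro x ⟨n, s, u, m, φ, hm, -, hφ, hker, rfl⟩
  set k : Fin s → ℕ := fun i => orderIn (finiteResidual Γ) (φ (u i)) with hk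
  have hkpos : ∀ i, 0 < k i := by
    intro i
    refine (orderIn_spec (finiteResidual Γ) (φ (u i)) (hm i) ?_).1
    have : φ (u i ^ m i) = 1 := by
      rw [← MonoidHom.mem_ker, hker]
      exact Subgroup.subset_normalClosure ⟨i, rfl⟩
    rw [← map_pow, this]
    exact one_mem _
  obtain ⟨K, hK, hKf, hord⟩ := exists_finite_quotient (fun i => φ (u i)) k
    (fun i j hj hlt => pow_notMem_of_lt_orderIn _ _ hj hlt)
  choose y hy using fun l : Fin d => hφ (γ (FreeGroup.of l))
  have hgen : Subgroup.closure (Set.range fun l => φ (y l)) = ⊤ := by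
    have h1 : (Set.range fun l => φ (y l)) = γ '' Set.range FreeGroup.of := by
      rw [← Set.range_comp]
      congr 1
      funext l
      exact hy l
    rw [h1, ← MonoidHom.map_closure, FreeGroup.closure_range_of, Subgroup.map_top_of_surjective γ hγ]
  have hmain := card_le_of_presentation φ (QuotientGroup.mk' K) u m hker y hgen
  have hc : (0 : ℝ) < Nat.card (Γ ⧸ K) := by exact_mod_cast Nat.card_pos
  have hinv : ∀ i, (Module.finrank ℚ (invariants (QuotientGroup.mk' K (φ (u i)))) : ℝ) ≤
      Nat.card (Γ ⧸ K) * (k i : ℝ)⁻¹ := by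
    intro i
    have h1 := (Nat.mul_le_mul_left _ (hord i)).trans
      (finrank_invariants_mul_le (QuotientGroup.mk' K (φ (u i))))
    rw [← div_eq_mul_inv, le_div_iff₀ (by exact_mod_cast hkpos i)]
    exact_mod_cast h1
  have hmain' : (n : ℝ) * Nat.card (Γ ⧸ K) ≤ d * Nat.card (Γ ⧸ K) +
      ∑ i, (Module.finrank ℚ (invariants (QuotientGroup.mk' K (φ (u i)))) : ℝ) := by
    exact_mod_cast hmain
  have hsum := Finset.sum_le_sum fun i (_ : i ∈ Finset.univ) => hinv i
  rw [← Finset.mul_sum] at hsum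
  have : Nat.card (Γ ⧸ K) * ((n : ℝ) - ∑ i, (k i : ℝ)⁻¹) ≤ Nat.card (Γ ⧸ K) * (d : ℝ) := by
    linarith
  exact le_of_mul_le_mul_left this hc

/-! ### The added relators -/

/-- Presentations may be indexed by an arbitrary finite type of relators. -/
lemma mem_rdefSet {Γ ι : Type*} [Group Γ] [Fintype ι] {n : ℕ} (u : ι → FreeGroup (Fin n))
    (m : ι → ℕ) (φ : FreeGroup (Fin n) →* Γ) (hm : ∀ i, 1 ≤ m i) (hu : ∀ i, NotProperPower (u i))
    (hφ : Function.Surjective φ)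
    (hker : φ.ker = Subgroup.normalClosure (Set.range fun i => u i ^ m i)) :
    (n : ℝ) - ∑ i, ((orderIn (finiteResidual Γ) (φ (u i)) : ℝ))⁻¹ ∈ rdefSet Γ := by
  let e := (Fintype.equivFin ι).symm
  refine ⟨n, Fintype.card ι, u ∘ e, m ∘ e, φ, fun i => hm _, fun i => hu _, hφ, ?_, ?_⟩
  · rw [hker, ← e.surjective.range_comp]
    rfl
  · rw [← Equiv.sum_comp e]
    rfl

lemma rdefSet_nonempty {Γ : Type*} [Group Γ] (h : FinitelyPresentedGroup Γ) :
    (rdefSet Γ).Nonempty := by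
  obtain ⟨n, R, φ, hφ, hker⟩ := h
  choose u a ha hu hua using fun r : {r // r ∈ R.erase 1} =>
    exists_root r.1 (Finset.ne_of_mem_erase r.2)
  refine ⟨_, mem_rdefSet u a φ ha hu hφ ?_⟩
  rw [hker]
  apply le_antisymm
  · apply Subgroup.normalClosure_le_normal
    intro r hr
    by_cases h1 : r = 1
    · rw [h1]
      exact one_mem _
    · exact Subgroup.subset_normalClosure ⟨⟨r, Finset.mem_erase.2 ⟨h1, hr⟩⟩, (hua _).symm⟩
  · apply Subgroup.normalClosure_mono
    rintro _ ⟨r, rfl⟩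
    simp only [← hua r]
    exact Finset.mem_of_mem_erase r.2

lemma ker_mk'_comp {Γ ι κ F : Type*} [Group Γ] [Group F] (φ : F →* Γ)
    (hφ : Function.Surjective φ) (r : ι → F) (hker : φ.ker = Subgroup.normalClosure (Set.range r))
    (w : κ → F) (N : Subgroup Γ) [N.Normal]
    (hN : N = Subgroup.normalClosure (Set.range fun j => φ (w j))) :
    ((QuotientGroup.mk' N).comp φ).ker =
      Subgroup.normalClosure (Set.range (Sum.elim r w)) := by
  have h1 : (Set.range fun j => φ (w j)) = φ '' Set.range w := Set.range_comp φ w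
  rw [← MonoidHom.comap_ker, QuotientGroup.ker_mk', hN, h1, ← Subgroup.map_normalClosure _ _ hφ,
    Subgroup.comap_map_eq, hker, Set.Sum.elim_range, Subgroup.normalClosure_union, sup_comm]

/-! ### The theorem -/

/-- for non-trivial elements `g₁, …, g_m` whose images in `G/R_G` have
infinite order, and `H_n` the normal closure of their `n`-th powers: for every `ε > 0`
there is a natural number `k` such that for every non-zero integer `q`,
`rdef(G/H_{kq}) ≥ rdef(G) − ε`. -/
theorem statement16 {G : Type*} [Group G] (hG : FinitelyPresentedGroup G)
    (m : ℕ) (g : Fin m → G) (hg1 : ∀ i, g i ≠ 1)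
    (hginf : ∀ i, orderIn (finiteResidual G) (g i) = 0) :
    ∀ ε : ℝ, 0 < ε → ∃ k : ℕ, 0 < k ∧ ∀ q : ℤ, q ≠ 0 →
      rdef G - ε ≤
        rdef (G ⧸ Subgroup.normalClosure (Set.range fun i => g i ^ ((k : ℤ) * q))) := by
  intro ε hε
  obtain ⟨x, ⟨n, s, u, a, φ, ha, hu, hφ, hker, rfl⟩, hx⟩ :=
    exists_lt_of_lt_csSup (rdefSet_nonempty hG) (show rdef G - ε / 2 < sSup (rdefSet G) by
      rw [← rdef_eq]; linarith)
  have hord_pos : ∀ i, 0 < orderIn (finiteResidual G) (φ (u i)) := by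
    intro i
    refine (orderIn_spec (finiteResidual G) (φ (u i)) (ha i) ?_).1
    have : φ (u i ^ a i) = 1 := by
      rw [← MonoidHom.mem_ker, hker]
      exact Subgroup.subset_normalClosure ⟨i, rfl⟩
    rw [← map_pow, this]
    exact one_mem _
  -- With `m / M ≤ ε / 2`, the `m` added relators cost at most `ε / 2`.
  obtain ⟨M, hM⟩ := exists_nat_gt (m / (ε / 2))
  have hM0 : (0 : ℝ) < M := lt_of_le_of_lt (by positivity) hM
  have hMpos : 0 < M := by exact_mod_cast hM0
  obtain ⟨K, hK, hKf, hKord⟩ := exists_finite_quotient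
    (Sum.elim (fun i => φ (u i)) g)
    (Sum.elim (fun i => orderIn (finiteResidual G) (φ (u i))) (fun _ => M)) (by
      rintro (i | i) j hj hlt
      · exact pow_notMem_of_lt_orderIn _ _ hj hlt
      · intro hmem
        have := (orderIn_spec (finiteResidual G) (g i) hj hmem).1
        rw [hginf i] at this
        exact lt_irrefl _ this)
  choose w hw using fun j => hφ (g j)
  have hw1 : ∀ j, w j ≠ 1 := by
    intro j h
    apply hg1 j
    rw [← hw, h, map_one]
  choose v b hb hv hvb using fun j => exists_root (w j) (hw1 j)
  refine ⟨Nat.card (G ⧸ K), Nat.card_pos, fun q hq => ?_⟩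
  set k := Nat.card (G ⧸ K) with hk
  have hkq : 0 < k * q.natAbs := Nat.mul_pos Nat.card_pos (Int.natAbs_pos.2 hq)
  have hNeq : Subgroup.normalClosure (Set.range fun i => g i ^ ((k : ℤ) * q)) =
      Subgroup.normalClosure (Set.range fun i => φ (v i ^ (b i * (k * q.natAbs)))) := by
    have hpow : ∀ i, φ (v i ^ (b i * (k * q.natAbs))) = g i ^ (k * q.natAbs) := by
      intro i
      rw [pow_mul, ← hvb, map_pow, hw]
    simp only [hpow]
    have hsgn : ∀ i, g i ^ ((k : ℤ) * q) = g i ^ (k * q.natAbs) ∨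
        g i ^ ((k : ℤ) * q) = (g i ^ (k * q.natAbs))⁻¹ := by
      intro i
      rcases Int.natAbs_eq q with h | h
      · left
        rw [← zpow_natCast, Nat.cast_mul, ← h]
      · right
        rw [← zpow_natCast, Nat.cast_mul, ← zpow_neg, ← mul_neg, ← h]
    apply le_antisymm <;> apply Subgroup.normalClosure_le_normal <;> rintro _ ⟨i, rfl⟩
    · have hmem : g i ^ (k * q.natAbs) ∈
          Subgroup.normalClosure (Set.range fun i => g i ^ (k * q.natAbs)) :=
        Subgroup.subset_normalClosure ⟨i, rfl⟩
      rcases hsgn i with h | h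
      · simp only [h]
        exact hmem
      · simp only [h]
        exact inv_mem hmem
    · have hmem : g i ^ ((k : ℤ) * q) ∈
          Subgroup.normalClosure (Set.range fun i => g i ^ ((k : ℤ) * q)) :=
        Subgroup.subset_normalClosure ⟨i, rfl⟩
      rcases hsgn i with h | h
      · rw [h] at hmem
        exact hmem
      · rw [h] at hmem
        exact inv_mem_iff.1 hmem
  -- `G ⧸ K` has exponent dividing `k`, so it is a quotient of `G ⧸ H_{kq}`.
  have hNK : Subgroup.normalClosure (Set.range fun i => g i ^ ((k : ℤ) * q)) ≤ K := by
    apply Subgroup.normalClosure_le_normal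
    rintro _ ⟨i, rfl⟩
    change g i ^ ((k : ℤ) * q) ∈ K
    rw [← QuotientGroup.eq_one_iff, QuotientGroup.mk_zpow, zpow_mul, zpow_natCast, hk,
      pow_card_eq_one', one_zpow]
  have hker' := ker_mk'_comp φ hφ (fun i => u i ^ a i) hker
    (fun i => v i ^ (b i * (k * q.natAbs))) _ hNeq
  set N := Subgroup.normalClosure (Set.range fun i => g i ^ ((k : ℤ) * q)) with hN
  have hψ : Function.Surjective ((QuotientGroup.mk' N).comp φ) :=
    (QuotientGroup.mk'_surjective N).comp hφ
  let f : G ⧸ N →* G ⧸ K := QuotientGroup.map N K (MonoidHom.id G) hNK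
  have hf : ∀ z, f ((QuotientGroup.mk' N).comp φ z) = QuotientGroup.mk' K (φ z) := fun z => rfl
  have hmem := mem_rdefSet (Sum.elim u v) (Sum.elim a (fun i => b i * (k * q.natAbs)))
    ((QuotientGroup.mk' N).comp φ)
    (by
      rintro (i | i)
      · exact ha i
      · exact Nat.mul_pos (hb i) hkq)
    (by
      rintro (i | i)
      · exact hu i
      · exact hv i) hψ
    (by
      rw [hker']
      congr 2
      funext i
      cases i <;> rfl)
  have hbdd := bddAbove_rdefSet ((QuotientGroup.mk' N).comp φ) hψ
  rw [rdef_eq (G ⧸ N)]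
  refine le_trans ?_ (le_csSup hbdd hmem)
  rw [Fintype.sum_sum_type]
  simp only [Sum.elim_inl, Sum.elim_inr]
  have h1 : ∑ i, ((orderIn (finiteResidual (G ⧸ N)) ((QuotientGroup.mk' N).comp φ (u i)) : ℝ))⁻¹ ≤
      ∑ i, ((orderIn (finiteResidual G) (φ (u i)) : ℝ))⁻¹ :=
    Finset.sum_le_sum fun i _ => inv_orderIn_le f _ (hord_pos i) (by
      rw [hf]
      exact hKord (Sum.inl i))
  have h2 : ∑ i, ((orderIn (finiteResidual (G ⧸ N)) ((QuotientGroup.mk' N).comp φ (v i)) : ℝ))⁻¹ ≤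
      ∑ _i : Fin m, (M : ℝ)⁻¹ :=
    Finset.sum_le_sum fun i _ => inv_orderIn_le f _ hMpos (by
      rw [hf]
      -- `g i` is the image of a power of `v i`, so its order divides that of the image of `v i`.
      have hdvd : orderOf (QuotientGroup.mk' K (g i)) ∣ orderOf (QuotientGroup.mk' K (φ (v i))) := by
        rw [← hw i, hvb i, map_pow, map_pow]
        exact orderOf_pow_dvd _
      exact (hKord (Sum.inr i)).trans (Nat.le_of_dvd (orderOf_pos _) hdvd))
  have h3 : ∑ _i : Fin m, (M : ℝ)⁻¹ ≤ ε / 2 := by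
    rw [Finset.sum_const, Finset.card_univ, Fintype.card_fin, nsmul_eq_mul, ← div_eq_mul_inv,
      div_le_iff₀ hM0]
    rw [div_lt_iff₀ (by positivity)] at hM
    linarith
  linarith

end ResDef
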